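/- ∫₀^{∞} (t/(1+t²)²) · (∫₀^{π/2} √(1 + t² sin²θ) dθ) dt = π²/8. -/

import Mathlib

open Real

/-!
On the unit sphere the substitution `t = tan φ` turns the double integral into
`∫ √(1 - x²) dσ` over the octant `x, y, z > 0`, where `x = sin φ cos θ` and `z = cos φ`.
By symmetry the height may be measured along the `x`-axis instead of the `z`-axis, and Archimedes'
theorem, that area on the sphere is uniform in height, then gives
`(π / 2) ∫₀¹ √(1 - x²) dx = (π / 2) (π / 4)`.
In terms of elliptic integrals, this is the imaginary modulus transformation followed by the
evaluation of `∫₀¹ E(√(1 - k²)) dk`, with `k = z`.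
-/

open Set MeasureTheory

/-- The complete elliptic integral of the second kind, as a function of the parameter `m = k²`
rather than of the modulus `k`, so that an imaginary modulus `k = it` is the real parameter
`m = -t²`. -/
noncomputable def ellipticE (m : ℝ) : ℝ :=
  ∫ θ in (0 : ℝ)..(π / 2), √(1 - m * sin θ ^ 2)

lemma ellipticE_nonneg (m : ℝ) : 0 ≤ ellipticE m :=
  intervalIntegral.integral_nonneg pi_div_two_pos.le fun _ _ => sqrt_nonneg _

lemma continuous_ellipticE : Continuous ellipticE :=
  intervalIntegral.continuous_parametric_intervalIntegral_of_continuous'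
    (f := fun m θ => √(1 - m * sin θ ^ 2)) (by unfold Function.uncurry; fun_prop) _ _

lemma ellipticE_eq_integral_cos (m : ℝ) :
    ellipticE m = ∫ θ in (0 : ℝ)..(π / 2), √(1 - m * cos θ ^ 2) := by
  simpa [ellipticE, sin_pi_div_two_sub] using
    (intervalIntegral.integral_comp_sub_left (a := 0) (b := π / 2)
      (fun θ => √(1 - m * sin θ ^ 2)) (π / 2)).symm

lemma ellipticE_eq_sqrt_mul_ellipticE_div {m : ℝ} (hm : m < 1) :
    ellipticE m = √(1 - m) * ellipticE (m / (m - 1)) := by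
  have hm' : 0 < 1 - m := sub_pos.2 hm
  rw [ellipticE_eq_integral_cos (m / (m - 1)), ellipticE, ← intervalIntegral.integral_const_mul]
  refine intervalIntegral.integral_congr fun θ _ => ?_
  have hne : m - 1 ≠ 0 := by linarith
  have hfactor : 1 - m * sin θ ^ 2 = (1 - m) * (1 - m / (m - 1) * cos θ ^ 2) := by
    rw [sin_sq]
    field_simp
    ring
  simp only [hfactor, sqrt_mul hm'.le]

lemma ellipticE_neg_sq (t : ℝ) :
    ellipticE (-t ^ 2) = √(1 + t ^ 2) * ellipticE (1 - (√(1 + t ^ 2))⁻¹ ^ 2) := by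
  have hpos : 0 < 1 + t ^ 2 := by positivity
  have hparam : -t ^ 2 / (-t ^ 2 - 1) = 1 - (√(1 + t ^ 2))⁻¹ ^ 2 := by
    rw [inv_pow, sq_sqrt hpos.le, show -t ^ 2 - 1 = -(1 + t ^ 2) by ring]
    field_simp
    ring
  rw [ellipticE_eq_sqrt_mul_ellipticE_div (by linarith [sq_nonneg t]), hparam, sub_neg_eq_add]

lemma image_inv_sqrt_one_add_sq_Ioi :
    (fun t : ℝ => (√(1 + t ^ 2))⁻¹) '' Ioi 0 = Ioo 0 1 := by
  ext k
  constructor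
  · rintro ⟨t, ht : 0 < t, rfl⟩
    have hone : 1 < √(1 + t ^ 2) := by
      rw [lt_sqrt zero_le_one]
      nlinarith
    exact ⟨by positivity, inv_lt_one_of_one_lt₀ hone⟩
  · rintro ⟨hk0, hk1⟩
    have hpos : 0 < 1 - k ^ 2 := by nlinarith
    refine ⟨√(1 - k ^ 2) / k, div_pos (sqrt_pos.2 hpos) hk0, ?_⟩
    have hsq : 1 + (√(1 - k ^ 2) / k) ^ 2 = k⁻¹ ^ 2 := by
      rw [div_pow, sq_sqrt hpos.le]
      field_simp
      ring
    simp only [hsq, sqrt_sq (inv_pos.2 hk0).le, inv_inv]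

lemma antitoneOn_inv_sqrt_one_add_sq : AntitoneOn (fun t : ℝ => (√(1 + t ^ 2))⁻¹) (Ioi 0) := by
  intro s (hs : 0 < s) t _ hst
  dsimp only
  gcongr

lemma hasDerivAt_inv_sqrt_one_add_sq (t : ℝ) :
    HasDerivAt (fun t : ℝ => (√(1 + t ^ 2))⁻¹) (-(t / √(1 + t ^ 2) ^ 3)) t := by
  have hpos : 0 < 1 + t ^ 2 := by positivity
  refine ((((hasDerivAt_pow 2 t).const_add 1).sqrt hpos.ne').fun_inv
    (by positivity)).congr_deriv ?_
  field_simp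
  simp

lemma integral_Ioi_div_smul_comp_inv_sqrt {F : Type*} [NormedAddCommGroup F] [NormedSpace ℝ F]
    (f : ℝ → F) :
    ∫ t in Ioi (0 : ℝ), (t / √(1 + t ^ 2) ^ 3) • f (√(1 + t ^ 2))⁻¹ =
      ∫ k in Ioo (0 : ℝ) 1, f k := by
  rw [← image_inv_sqrt_one_add_sq_Ioi, integral_image_eq_integral_deriv_smul_of_antitoneOn
    measurableSet_Ioi (fun t _ => (hasDerivAt_inv_sqrt_one_add_sq t).hasDerivWithinAt)
    antitoneOn_inv_sqrt_one_add_sq]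
  simp only [neg_neg]

lemma strictMonoOn_mul_sin {r : ℝ} (hr : 0 < r) :
    StrictMonoOn (fun θ => r * sin θ) (Icc 0 (π / 2)) := by
  have hsub : Icc 0 (π / 2) ⊆ Icc (-(π / 2)) (π / 2) :=
    Icc_subset_Icc_left (by linarith [pi_pos])
  exact fun a ha b hb hab => mul_lt_mul_of_pos_left (strictMonoOn_sin (hsub ha) (hsub hb) hab) hr

lemma image_mul_sin_Ioo {r : ℝ} (hr : 0 < r) :
    (fun θ => r * sin θ) '' Ioo 0 (π / 2) = Ioo 0 r := by
  simpa using ContinuousOn.image_Ioo_of_strictMonoOn pi_div_two_pos.le (by fun_prop)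
    (strictMonoOn_mul_sin hr)

lemma lintegral_Ioo_inv_sqrt_mul {r : ℝ} (hr : 0 < r) (g : ℝ → ENNReal) :
    ∫⁻ x in Ioo 0 r, ENNReal.ofReal (√(r ^ 2 - x ^ 2))⁻¹ * g x =
      ∫⁻ θ in Ioo 0 (π / 2), g (r * sin θ) := by
  rw [← image_mul_sin_Ioo hr, lintegral_image_eq_lintegral_deriv_mul_of_monotoneOn measurableSet_Ioo
    (fun θ _ => ((hasDerivAt_sin θ).const_mul r).hasDerivWithinAt)
    ((strictMonoOn_mul_sin hr).monotoneOn.mono Ioo_subset_Icc_self)]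
  refine setLIntegral_congr_fun measurableSet_Ioo fun θ hθ => ?_
  have hcos : 0 < r * cos θ :=
    mul_pos hr (cos_pos_of_mem_Ioo ⟨by linarith [hθ.1, pi_pos], hθ.2⟩)
  have hsqrt : √(r ^ 2 - (r * sin θ) ^ 2) = r * cos θ := by
    rw [show r ^ 2 - (r * sin θ) ^ 2 = (r * cos θ) ^ 2 by rw [mul_pow, mul_pow, sin_sq]; ring,
      sqrt_sq hcos.le]
  simp only [hsqrt]
  rw [← mul_assoc, ← ENNReal.ofReal_mul hcos.le, mul_inv_cancel₀ hcos.ne', ENNReal.ofReal_one,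
    one_mul]

-- The junk value `(√a)⁻¹ = 0` for `a ≤ 0` cuts the integral off at `x = r`.
lemma lintegral_Ioo_inv_sqrt_mul_of_le {r ρ : ℝ} (hr : 0 < r) (hrρ : r ≤ ρ) (g : ℝ → ENNReal) :
    ∫⁻ x in Ioo 0 ρ, ENNReal.ofReal (√(r ^ 2 - x ^ 2))⁻¹ * g x =
      ∫⁻ θ in Ioo 0 (π / 2), g (r * sin θ) := by
  have hsupport :
      (fun x => ENNReal.ofReal (√(r ^ 2 - x ^ 2))⁻¹ * g x).support ⊆ Iio r := by
    intro x hx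
    by_contra hrx
    have hnonpos : r ^ 2 - x ^ 2 ≤ 0 := by nlinarith [notMem_Iio.1 hrx]
    simp [sqrt_eq_zero_of_nonpos hnonpos] at hx
  rw [← setLIntegral_eq_of_support_subset hsupport, Measure.restrict_restrict measurableSet_Iio,
    Iio_inter_Ioo, min_eq_left hrρ, lintegral_Ioo_inv_sqrt_mul hr]

-- Both sides integrate `g` of one coordinate over the octant of the sphere of radius `ρ`: on the
-- left in cylindrical coordinates about another axis, on the right about the axis of that
-- coordinate. The area element `dz dx / √(ρ² - z² - x²)` is symmetric in the two coordinates.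
lemma lintegral_lintegral_sqrt_sub_sq_mul_sin (ρ : ℝ) {g : ℝ → ENNReal} (hg : Measurable g) :
    ∫⁻ z in Ioo 0 ρ, ∫⁻ θ in Ioo 0 (π / 2), g (√(ρ ^ 2 - z ^ 2) * sin θ) =
      ENNReal.ofReal (π / 2) * ∫⁻ x in Ioo 0 ρ, g x := by
  have slice {z : ℝ} (hz : z ∈ Ioo 0 ρ) (f : ℝ → ENNReal) :
      ∫⁻ x in Ioo 0 ρ, ENNReal.ofReal (√(ρ ^ 2 - z ^ 2 - x ^ 2))⁻¹ * f x =
        ∫⁻ θ in Ioo 0 (π / 2), f (√(ρ ^ 2 - z ^ 2) * sin θ) := by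
    have hpos : 0 < ρ ^ 2 - z ^ 2 := by nlinarith [hz.1, hz.2]
    have hle : √(ρ ^ 2 - z ^ 2) ≤ ρ :=
      (sqrt_le_left (hz.1.trans hz.2).le).2 (by linarith [sq_nonneg z])
    simpa only [sq_sqrt hpos.le] using lintegral_Ioo_inv_sqrt_mul_of_le (sqrt_pos.2 hpos) hle f
  calc ∫⁻ z in Ioo 0 ρ, ∫⁻ θ in Ioo 0 (π / 2), g (√(ρ ^ 2 - z ^ 2) * sin θ)
      = ∫⁻ z in Ioo 0 ρ, ∫⁻ x in Ioo 0 ρ, ENNReal.ofReal (√(ρ ^ 2 - z ^ 2 - x ^ 2))⁻¹ * g x :=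
        setLIntegral_congr_fun measurableSet_Ioo fun z hz => (slice hz g).symm
    _ = ∫⁻ x in Ioo 0 ρ, ∫⁻ z in Ioo 0 ρ, ENNReal.ofReal (√(ρ ^ 2 - z ^ 2 - x ^ 2))⁻¹ * g x :=
        lintegral_lintegral_swap (by unfold Function.uncurry; fun_prop)
    _ = ∫⁻ x in Ioo 0 ρ, ENNReal.ofReal (π / 2) * g x := by
        refine setLIntegral_congr_fun measurableSet_Ioo fun x hx => ?_
        have hquarter := slice hx fun _ => 1
        simp only [mul_one, setLIntegral_one, Real.volume_Ioo, sub_zero] at hquarter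
        simp only [sub_right_comm _ (_ ^ 2) (x ^ 2)]
        rw [lintegral_mul_const _ (by fun_prop), hquarter]
    _ = ENNReal.ofReal (π / 2) * ∫⁻ x in Ioo 0 ρ, g x := lintegral_const_mul _ hg

lemma integral_zero_one_sqrt_one_sub_sq : ∫ x in (0 : ℝ)..1, √(1 - x ^ 2) = π / 4 := by
  have hint (a b : ℝ) : IntervalIntegrable (fun x : ℝ => √(1 - x ^ 2)) volume a b :=
    Continuous.intervalIntegrable (by fun_prop) a b
  have hsymm : ∫ x in (-1 : ℝ)..0, √(1 - x ^ 2) = ∫ x in (0 : ℝ)..1, √(1 - x ^ 2) := by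
    have hneg := intervalIntegral.integral_comp_neg (a := 0) (b := 1) fun x : ℝ => √(1 - x ^ 2)
    simpa only [neg_sq, neg_zero] using hneg.symm
  have hsum := intervalIntegral.integral_add_adjacent_intervals (hint (-1) 0) (hint 0 1)
  rw [integral_sqrt_one_sub_sq, hsymm] at hsum
  linarith

lemma ofReal_intervalIntegral_eq_lintegral_Ioo {f : ℝ → ℝ} {a b : ℝ} (hab : a ≤ b)
    (hf : IntervalIntegrable f volume a b) (hf0 : ∀ x ∈ Ioo a b, 0 ≤ f x) :
    ENNReal.ofReal (∫ x in a..b, f x) = ∫⁻ x in Ioo a b, ENNReal.ofReal (f x) := by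
  rw [intervalIntegral.integral_of_le hab, integral_Ioc_eq_integral_Ioo]
  exact ofReal_integral_eq_lintegral_ofReal
    ((intervalIntegrable_iff_integrableOn_Ioo_of_le hab).1 hf)
    (ae_restrict_of_forall_mem measurableSet_Ioo hf0)

lemma integral_ellipticE_one_sub_sq : ∫ k in (0 : ℝ)..1, ellipticE (1 - k ^ 2) = π ^ 2 / 8 := by
  have hE (k : ℝ) (hk : k ∈ Ioo (0 : ℝ) 1) : ENNReal.ofReal (ellipticE (1 - k ^ 2)) =
      ∫⁻ θ in Ioo 0 (π / 2),
        ENNReal.ofReal √(1 - (√(1 ^ 2 - k ^ 2) * sin θ) ^ 2) := by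
    have hnonneg : 0 ≤ 1 - k ^ 2 := by nlinarith [hk.1, hk.2]
    simp only [mul_pow, one_pow, sq_sqrt hnonneg]
    exact ofReal_intervalIntegral_eq_lintegral_Ioo pi_div_two_pos.le
      (Continuous.intervalIntegrable (by fun_prop) _ _) fun _ _ => sqrt_nonneg _
  have hcont : Continuous fun k => ellipticE (1 - k ^ 2) :=
    continuous_ellipticE.comp (by fun_prop)
  rw [← ENNReal.ofReal_eq_ofReal_iff
    (intervalIntegral.integral_nonneg zero_le_one fun _ _ => ellipticE_nonneg _) (by positivity)]
  calc ENNReal.ofReal (∫ k in (0 : ℝ)..1, ellipticE (1 - k ^ 2))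
      = ∫⁻ k in Ioo (0 : ℝ) 1, ENNReal.ofReal (ellipticE (1 - k ^ 2)) :=
        ofReal_intervalIntegral_eq_lintegral_Ioo zero_le_one (hcont.intervalIntegrable _ _)
          fun _ _ => ellipticE_nonneg _
    _ = ENNReal.ofReal (π / 2) * ∫⁻ x in Ioo (0 : ℝ) 1, ENNReal.ofReal √(1 - x ^ 2) := by
        rw [setLIntegral_congr_fun measurableSet_Ioo hE]
        exact lintegral_lintegral_sqrt_sub_sq_mul_sin 1
          (g := fun x => ENNReal.ofReal √(1 - x ^ 2)) (by fun_prop)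
    _ = ENNReal.ofReal (π ^ 2 / 8) := by
        rw [← ofReal_intervalIntegral_eq_lintegral_Ioo zero_le_one
          (Continuous.intervalIntegrable (by fun_prop) _ _) fun _ _ => sqrt_nonneg _,
          integral_zero_one_sqrt_one_sub_sq, ← ENNReal.ofReal_mul (by positivity)]
        ring_nf

/-- `∫₀^∞ t/(1+t²)² · E(it) dt = π²/8`, where `E(it) = ∫₀^{π/2} √(1 + t² sin²θ) dθ`
is the complete elliptic integral of the second kind with imaginary modulus. -/
theorem integral_E_over_sq :
    ∫ t in Set.Ioi (0:ℝ),
        t / (1 + t ^ 2) ^ 2 *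
          ∫ θ in (0:ℝ)..(π/2), Real.sqrt (1 + t ^ 2 * Real.sin θ ^ 2)
      = π ^ 2 / 8 := by
  have hintegrand (t : ℝ) :
      t / (1 + t ^ 2) ^ 2 * ∫ θ in (0 : ℝ)..(π / 2), √(1 + t ^ 2 * sin θ ^ 2) =
        (t / √(1 + t ^ 2) ^ 3) • ellipticE (1 - (√(1 + t ^ 2))⁻¹ ^ 2) := by
    have hE : ∫ θ in (0 : ℝ)..(π / 2), √(1 + t ^ 2 * sin θ ^ 2) = ellipticE (-t ^ 2) := by
      simp only [ellipticE, neg_mul, sub_neg_eq_add]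
    have hsq : 1 + t ^ 2 = √(1 + t ^ 2) ^ 2 := (sq_sqrt (by positivity)).symm
    have hweight : t / (1 + t ^ 2) ^ 2 * √(1 + t ^ 2) = t / √(1 + t ^ 2) ^ 3 := by
      nth_rw 1 [hsq]
      field_simp
    rw [hE, ellipticE_neg_sq, ← mul_assoc, hweight, smul_eq_mul]
  simp only [hintegrand]
  rw [integral_Ioi_div_smul_comp_inv_sqrt fun k => ellipticE (1 - k ^ 2),
    ← integral_Ioc_eq_integral_Ioo, ← intervalIntegral.integral_of_le zero_le_one,
    integral_ellipticE_one_sub_sq]
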